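/- Let L ≥ 2 be an integer, A ∈ ℝ^{M×N}, y ∈ ℝ^M, and let x₀ ∈ ℝ^N have all entries strictly positive. Suppose x : [0,∞) → ℝ^N is differentiable and satisfies the reduced gradient flow x'(t) = −[Aᵀ(A x(t)^{⊙L} − y)] ⊙ x(t)^{⊙(L−1)} for all t ≥ 0, with x(0) = x₀. Then the limit x̃∞ := lim_{t→∞} x(t)^{⊙L} exists, x̃∞ is entrywise nonnegative, and x̃∞ belongs to S₊, i.e., x̃∞ minimizes ‖Az − y‖₂² over all entrywise-nonnegative z ∈ ℝ^N. -/

import Mathlib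

open Filter Topology Matrix

noncomputable section

/-- The NNLS solution set `S₊ = argmin_{z ≥ 0} ‖Az − y‖₂²`. -/
def nnlsSet {M N : ℕ} (A : Matrix (Fin M) (Fin N) ℝ) (y : Fin M → ℝ) :
    Set (Fin N → ℝ) :=
  {z | (∀ i, 0 ≤ z i) ∧ ∀ w : Fin N → ℝ, (∀ i, 0 ≤ w i) →
    ∑ j, (A.mulVec z j - y j) ^ 2 ≤ ∑ j, (A.mulVec w j - y j) ^ 2}

/-- The reduced gradient flow `x'(t) = −[Aᵀ(A x(t)^{⊙L} − y)] ⊙ x(t)^{⊙(L−1)}` for `t ≥ 0`. -/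
def GradFlow {M N : ℕ} (A : Matrix (Fin M) (Fin N) ℝ) (y : Fin M → ℝ) (L : ℕ)
    (x : ℝ → Fin N → ℝ) : Prop :=
  ∀ t : ℝ, 0 ≤ t → ∀ i : Fin N,
    HasDerivAt (fun s => x s i)
      (-(Matrix.mulVec Aᵀ (A.mulVec (fun j => x t j ^ L) - y) i * x t i ^ (L - 1))) t

/-!
Powers are entrywise. Write `F z = ‖A z - y‖² / 2`, so that the flow is
`x' = -∇F(x ^ L) ⊙ x ^ (L - 1)`. It keeps `x` positive, because each entry solves a linear equation
`u' = c u`. For `a ≥ 0` let `D a x = ∑ᵢ ∫_{aᵢ}^{xᵢ} (s - aᵢ ^ L / s ^ (L - 1)) ds`. Along the flow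
the factors `xᵢ ^ (L - 1)` cancel, and by convexity

  `d/dt D a x = ⟨∇F(x ^ L), a ^ L - x ^ L⟩ ≤ F (a ^ L) - F (x ^ L)`.

Let `b ^ L` be a minimizer of `F` on the orthant; it exists because the image of the orthant under a
linear map is closed. Then `D b x` decreases, and `D b x ≥ ‖x - b‖² / 2` keeps `x` bounded. Since
`F (x ^ L)` decreases too, so does `t (F (x ^ L) - F (b ^ L)) + D b x`, whence
`F (x ^ L) → F (b ^ L)` at rate `1 / t`, and every cluster point `a` of `x` gives a minimizer
`a ^ L`. Finally `D a x` is itself decreasing and tends to `0` along a sequence of times, so it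
tends to `0`, and `x → a`.
-/

section NonnegativeCone

lemma exists_sub_smul_nonneg_apply_eq_zero {ι 𝕜 : Type*} [Finite ι] [Field 𝕜] [LinearOrder 𝕜]
    [IsStrictOrderedRing 𝕜] {z c : ι → 𝕜} (hz : 0 ≤ z) (hc : ∃ i, 0 < c i) :
    ∃ t : 𝕜, ∃ i, 0 < c i ∧ 0 ≤ z - t • c ∧ (z - t • c) i = 0 := by
  obtain ⟨i, hi, hmin⟩ :=
    Set.exists_min_image {i | 0 < c i} (fun i => z i / c i) (Set.toFinite _) hc
  have hci : 0 < c i := hi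
  refine ⟨z i / c i, i, hci, fun j => ?_, by simp [hci.ne']⟩
  have hratio : 0 ≤ z i / c i := div_nonneg (hz i) hci.le
  suffices z i / c i * c j ≤ z j by simpa using this
  rcases lt_or_ge 0 (c j) with hcj | hcj
  · exact (le_div_iff₀ hcj).1 (hmin j hcj)
  · exact (mul_nonpos_of_nonneg_of_nonpos hratio hcj).trans (hz j)

variable {ι E : Type*} [Finite ι] [AddCommGroup E] [Module ℝ E]

lemma image_nonneg_inter_eq_iUnion {f : (ι → ℝ) →ₗ[ℝ] E} {W : Submodule ℝ (ι → ℝ)} {c : ι → ℝ}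
    (hcW : c ∈ W) (hfc : f c = 0) (hc : ∃ i, 0 < c i) :
    f '' (Set.Ici 0 ∩ (W : Set (ι → ℝ))) =
      ⋃ i : {i // 0 < c i}, f '' (Set.Ici 0 ∩ (W ⊓ LinearMap.ker (LinearMap.proj i.1) :
        Submodule ℝ (ι → ℝ))) := by
  refine Set.Subset.antisymm ?_
    (Set.iUnion_subset fun i => Set.image_mono fun z hz => ⟨hz.1, hz.2.1⟩)
  rintro _ ⟨z, ⟨hz, hzW⟩, rfl⟩
  obtain ⟨t, i, hci, hnonneg, hzero⟩ := exists_sub_smul_nonneg_apply_eq_zero hz hc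
  refine Set.mem_iUnion.2 ⟨⟨i, hci⟩, z - t • c, ⟨hnonneg, ?_, hzero⟩, by simp [hfc]⟩
  exact W.sub_mem hzW (W.smul_mem t hcW)

variable [TopologicalSpace E] [IsTopologicalAddGroup E] [ContinuousSMul ℝ E] [T2Space E]

lemma isClosed_image_nonneg_inter (f : (ι → ℝ) →ₗ[ℝ] E) (W : Submodule ℝ (ι → ℝ)) :
    IsClosed (f '' (Set.Ici 0 ∩ W)) := by
  induction W using WellFoundedLT.induction with
  | ind W ih =>
  by_cases hinj : LinearMap.ker (f.domRestrict W) = ⊥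
  · have himage : f '' (Set.Ici 0 ∩ W) = f.domRestrict W '' ((↑) ⁻¹' Set.Ici (0 : ι → ℝ)) := by
      ext v
      simp [and_assoc]
    rw [himage]
    exact (LinearMap.isClosedEmbedding_of_injective hinj).isClosedMap _
      (isClosed_Ici.preimage continuous_subtype_val)
  · obtain ⟨c, hcW, hfc, hpos⟩ : ∃ c ∈ W, f c = 0 ∧ ∃ i, 0 < c i := by
      obtain ⟨c, hfc, hc⟩ := (Submodule.ne_bot_iff _).1 hinj
      obtain ⟨i, hi⟩ := Function.ne_iff.1 (Subtype.coe_ne_coe.2 hc)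
      rcases lt_or_gt_of_ne hi with hneg | hpos
      · exact ⟨-c, W.neg_mem c.2, by simpa using hfc, i, by simpa using hneg⟩
      · exact ⟨c, c.2, hfc, i, hpos⟩
    rw [image_nonneg_inter_eq_iUnion hcW hfc hpos]
    refine isClosed_iUnion_of_finite fun i => ih _ (inf_le_left.lt_of_not_ge fun hle => ?_)
    exact i.2.ne' (hle hcW).2

lemma isClosed_image_nonneg (f : (ι → ℝ) →ₗ[ℝ] E) : IsClosed (f '' Set.Ici 0) := by
  simpa using isClosed_image_nonneg_inter f ⊤

end NonnegativeCone

lemma exists_isMinOn_norm_sub {ι E : Type*} [Finite ι] [NormedAddCommGroup E] [NormedSpace ℝ E]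
    [ProperSpace E] (f : (ι → ℝ) →ₗ[ℝ] E) (y : E) :
    ∃ z ∈ Set.Ici 0, IsMinOn (fun z => ‖f z - y‖) (Set.Ici 0) z := by
  obtain ⟨_, ⟨z, hz, rfl⟩, hdist⟩ :=
    (isClosed_image_nonneg f).exists_infDist_eq_dist (Set.nonempty_Ici.image f) y
  refine ⟨z, hz, fun w hw => ?_⟩
  simpa [← dist_eq_norm, dist_comm, ← hdist] using
    Metric.infDist_le_dist_of_mem (x := y) (Set.mem_image_of_mem f hw)

section Calculus

lemma fderiv_apply_sub_le_of_convexOn {E : Type*} [NormedAddCommGroup E] [NormedSpace ℝ E]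
    {s : Set E} {F : E → ℝ} {u w : E} (hconv : ConvexOn ℝ s F) (hF : DifferentiableAt ℝ F u)
    (hu : u ∈ s) (hw : w ∈ s) : fderiv ℝ F u (w - u) ≤ F w - F u := by
  have hline : HasDerivAt (F ∘ AffineMap.lineMap u w) (fderiv ℝ F u (w - u)) (0 : ℝ) := by
    refine HasFDerivAt.comp_hasDerivAt 0 ?_ AffineMap.hasDerivAt_lineMap
    simpa using hF.hasFDerivAt
  have hslope := (hconv.comp_affineMap (AffineMap.lineMap u w)).le_slope_of_hasDerivAt
    (x := 0) (y := 1) (by simpa using hu) (by simpa using hw) one_pos hline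
  simpa [slope_def_field] using hslope

lemma pos_of_hasDerivAt_mul_self {u c : ℝ → ℝ} {a : ℝ} (hc : ContinuousOn c (Set.Ici a))
    (hu : ∀ t, a ≤ t → HasDerivAt u (c t * u t) t) (ha : 0 < u a) {t : ℝ} (ht : a ≤ t) :
    0 < u t := by
  have hext : Continuous fun s => c (max a s) :=
    hc.comp_continuous (by fun_prop) fun s => le_max_left a s
  set E : ℝ → ℝ := fun t => ∫ s in a..t, c (max a s)
  have hE (s : ℝ) (hs : a ≤ s) : HasDerivAt E (c s) s := by
    simpa [hs] using hext.integral_hasStrictDerivAt a s |>.hasDerivAt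
  have hderiv (s : ℝ) (hs : a ≤ s) : HasDerivAt (fun r => u r * Real.exp (-E r)) 0 s :=
    ((hu s hs).mul (hE s hs).neg.exp).congr_deriv (by ring)
  have hconst : u t * Real.exp (-E t) = u a * Real.exp (-E a) :=
    constant_of_has_deriv_right_zero
      (fun s hs => (hderiv s hs.1).continuousAt.continuousWithinAt)
      (fun s hs => (hderiv s hs.1).hasDerivWithinAt) t ⟨ht, le_rfl⟩
  have hpos : 0 < u t * Real.exp (-E t) := hconst ▸ mul_pos ha (Real.exp_pos _)
  exact pos_of_mul_pos_left hpos (Real.exp_pos _).le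

lemma antitoneOn_Ici_of_hasDerivAt_nonpos {V V' : ℝ → ℝ} {a : ℝ}
    (hV : ∀ t, a ≤ t → HasDerivAt V (V' t) t) (hV' : ∀ t, a ≤ t → V' t ≤ 0) :
    AntitoneOn V (Set.Ici a) :=
  antitoneOn_of_hasDerivWithinAt_nonpos (convex_Ici a)
    (fun t ht => (hV t ht).continuousAt.continuousWithinAt)
    (fun t ht => (hV t (interior_subset ht)).hasDerivWithinAt)
    fun t ht => hV' t (interior_subset ht)

lemma tendsto_atTop_of_antitoneOn_of_mapClusterPt {V : ℝ → ℝ} {a l : ℝ}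
    (hanti : AntitoneOn V (Set.Ici a)) (hle : ∀ t, a ≤ t → l ≤ V t)
    (hl : MapClusterPt l atTop V) : Tendsto V atTop (𝓝 l) := by
  refine tendsto_order.2 ⟨fun b hb => ?_, fun b hb => ?_⟩
  · filter_upwards [eventually_ge_atTop a] with t ht using hb.trans_le (hle t ht)
  · obtain ⟨s, hsb, has⟩ :=
      ((hl.frequently (gt_mem_nhds hb)).and_eventually (eventually_ge_atTop a)).exists
    filter_upwards [eventually_ge_atTop s] with t ht
    exact (hanti has (has.trans ht) ht).trans_lt hsb

end Calculus

section Bregman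

/-- The Bregman divergence between `a ^ L` and `x ^ L` of the potential `φ` on `(0, ∞)` with
`φ''(s ^ L) = 1 / (L * s ^ (2 * L - 2))`, for `0 ≤ a` and `0 < x`; along the flow it decreases when
`a ^ L` is a minimizer. Its integrand `(s ^ L - a ^ L) / s ^ (L - 1)` is written as a difference so
that at `a = 0` it is `s`, including at the endpoint `s = 0`. -/
def powBregman (L : ℕ) (a x : ℝ) : ℝ := ∫ s in a..x, (s - a ^ L / s ^ (L - 1))

variable {L : ℕ} {a x s : ℝ}

lemma pow_div_pow_pred_le (hL : L ≠ 0) (ha : 0 ≤ a) (has : a ≤ s) : a ^ L / s ^ (L - 1) ≤ a := by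
  refine div_le_of_le_mul₀ (pow_nonneg (ha.trans has) _) ha ?_
  rw [← mul_pow_sub_one hL]
  gcongr

lemma le_pow_div_pow_pred (hL : L ≠ 0) (hs : 0 < s) (hsa : s ≤ a) : a ≤ a ^ L / s ^ (L - 1) := by
  rw [le_div_iff₀ (pow_pos hs _), ← mul_pow_sub_one hL]
  have := hs.le.trans hsa
  gcongr

lemma powBregman_zero_left (hL : L ≠ 0) : powBregman L 0 = fun x => x ^ 2 / 2 := by
  ext x
  simp [powBregman, hL]

lemma continuousOn_powBregman_integrand (hL : L ≠ 0) (ha : 0 ≤ a) (hx : 0 < x) :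
    ContinuousOn (fun s => s - a ^ L / s ^ (L - 1)) (Set.uIcc a x) := by
  rcases ha.eq_or_lt with rfl | ha
  · simpa [hL] using continuous_id'.continuousOn
  · have hne (s : ℝ) (hs : s ∈ Set.uIcc a x) : s ^ (L - 1) ≠ 0 :=
      (pow_pos ((lt_min ha hx).trans_le hs.1) _).ne'
    fun_prop (disch := assumption)

lemma hasDerivAt_powBregman (hL : L ≠ 0) (ha : 0 ≤ a) (hx : 0 < x) :
    HasDerivAt (powBregman L a) (x - a ^ L / x ^ (L - 1)) x := by
  have hmeas : Measurable fun s : ℝ => s - a ^ L / s ^ (L - 1) := by fun_prop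
  refine intervalIntegral.integral_hasDerivAt_right
    (continuousOn_powBregman_integrand hL ha hx).intervalIntegrable
    hmeas.stronglyMeasurable.stronglyMeasurableAtFilter ?_
  fun_prop (disch := positivity)

lemma continuousAt_powBregman_self (hL : L ≠ 0) (ha : 0 ≤ a) : ContinuousAt (powBregman L a) a := by
  rcases ha.eq_or_lt with rfl | ha
  · rw [powBregman_zero_left hL]
    fun_prop
  · exact (hasDerivAt_powBregman hL ha.le ha).continuousAt

lemma sq_sub_div_two_le_powBregman (hL : L ≠ 0) (ha : 0 ≤ a) (hx : 0 < x) :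
    (x - a) ^ 2 / 2 ≤ powBregman L a x := by
  have hint := (continuousOn_powBregman_integrand hL ha hx).intervalIntegrable
    (μ := MeasureTheory.volume)
  have hline : IntervalIntegrable (fun s => s - a) MeasureTheory.volume a x :=
    (by fun_prop : Continuous fun s : ℝ => s - a).intervalIntegrable a x
  have hlin : ∫ s in a..x, (s - a) = (x - a) ^ 2 / 2 := by
    rw [intervalIntegral.integral_comp_sub_right (fun s => s) a]
    simp
  rw [← hlin, powBregman]
  rcases le_total a x with hax | hxa
  · refine intervalIntegral.integral_mono_on hax hline hint fun s hs => ?_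
    exact sub_le_sub_left (pow_div_pow_pred_le hL ha hs.1) s
  · rw [intervalIntegral.integral_symm x a, intervalIntegral.integral_symm x a, neg_le_neg_iff]
    refine intervalIntegral.integral_mono_on hxa hint.symm hline.symm fun s hs => ?_
    exact sub_le_sub_left (le_pow_div_pow_pred hL (hx.trans_le hs.1) hs.2) s

variable {ι : Type*} [Fintype ι]

/-- The separable Bregman divergence between the entrywise powers `a ^ L` and `x ^ L`, the Lyapunov
function of `IsPowGradientFlow`. -/
def powBregmanSum (L : ℕ) (a x : ι → ℝ) : ℝ := ∑ i, powBregman L (a i) (x i)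

variable {a x : ι → ℝ}

lemma sum_sq_sub_div_two_le_powBregmanSum (hL : L ≠ 0) (ha : 0 ≤ a) (hx : ∀ i, 0 < x i) :
    ∑ i, (x i - a i) ^ 2 / 2 ≤ powBregmanSum L a x :=
  Finset.sum_le_sum fun i _ => sq_sub_div_two_le_powBregman hL (ha i) (hx i)

lemma powBregmanSum_nonneg (hL : L ≠ 0) (ha : 0 ≤ a) (hx : ∀ i, 0 < x i) :
    0 ≤ powBregmanSum L a x :=
  (Finset.sum_nonneg fun _ _ => by positivity).trans (sum_sq_sub_div_two_le_powBregmanSum hL ha hx)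

lemma dist_le_sqrt_powBregmanSum (hL : L ≠ 0) (ha : 0 ≤ a) (hx : ∀ i, 0 < x i) :
    dist x a ≤ √(2 * powBregmanSum L a x) := by
  refine (dist_pi_le_iff (Real.sqrt_nonneg _)).2 fun i => Real.abs_le_sqrt ?_
  have hsingle : (x i - a i) ^ 2 / 2 ≤ ∑ i, (x i - a i) ^ 2 / 2 :=
    Finset.single_le_sum (f := fun i => (x i - a i) ^ 2 / 2) (fun i _ => by positivity)
      (Finset.mem_univ i)
  linarith [sum_sq_sub_div_two_le_powBregmanSum hL ha hx]

lemma continuousAt_powBregmanSum_self (hL : L ≠ 0) (ha : 0 ≤ a) :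
    ContinuousAt (powBregmanSum L a) a :=
  tendsto_finsetSum _ fun i _ =>
    (continuousAt_powBregman_self hL (ha i)).tendsto.comp (continuous_apply i).continuousAt

lemma powBregmanSum_self : powBregmanSum L a a = 0 := by
  simp [powBregmanSum, powBregman]

end Bregman

section Flow

variable {ι : Type*} [DecidableEq ι]

lemma continuousLinearMap_pi_apply_eq_sum_single [Fintype ι] (f : (ι → ℝ) →L[ℝ] ℝ)
    (v : ι → ℝ) : f v = ∑ i, f (Pi.single i 1) * v i := by
  conv_lhs => rw [pi_eq_sum_univ' v, map_sum]
  simp [mul_comm]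

/-- The flow `x' = -∇F(x ^ L) ⊙ x ^ (L - 1)` on `[0, ∞)`, which generalizes `GradFlow` to an
arbitrary objective `F`; the `i`-th partial derivative of `F` is written as the value of `fderiv` at
the `i`-th unit vector. -/
def IsPowGradientFlow (F : (ι → ℝ) → ℝ) (L : ℕ) (x : ℝ → ι → ℝ) : Prop :=
  ∀ t : ℝ, 0 ≤ t → ∀ i, HasDerivAt (fun s => x s i)
    (-(fderiv ℝ F (x t ^ L) (Pi.single i 1) * x t i ^ (L - 1))) t

namespace IsPowGradientFlow

variable {F : (ι → ℝ) → ℝ} {L : ℕ} {x : ℝ → ι → ℝ}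

lemma continuousOn (hflow : IsPowGradientFlow F L x) : ContinuousOn x (Set.Ici 0) :=
  continuousOn_pi.2 fun i t ht => (hflow t ht i).continuousAt.continuousWithinAt

section Fintype

variable [Fintype ι]

lemma pos (hL : 2 ≤ L) (hF : ContDiff ℝ 1 F) (hflow : IsPowGradientFlow F L x)
    (h0 : ∀ i, 0 < x 0 i) {t : ℝ} (ht : 0 ≤ t) (i : ι) : 0 < x t i := by
  have hx := hflow.continuousOn
  have hxi : ContinuousOn (fun t => x t i) (Set.Ici 0) := continuousOn_pi.1 hx i
  have hgrad : ContinuousOn (fun t => fderiv ℝ F (x t ^ L) (Pi.single i 1)) (Set.Ici 0) :=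
    ((hF.continuous_fderiv one_ne_zero).comp_continuousOn (hx.pow L)).clm_apply continuousOn_const
  refine pos_of_hasDerivAt_mul_self (u := fun s => x s i) (hgrad.mul (hxi.pow (L - 2))).neg
    (fun s hs => ?_) (h0 i) ht
  refine (hflow s hs i).congr_deriv ?_
  have hpow : x s i ^ (L - 1) = x s i ^ (L - 2) * x s i := by
    rw [← pow_succ]
    congr 1
    omega
  simp only [hpow, Pi.neg_apply, Pi.mul_apply, Pi.pow_apply]
  ring

lemma hasDerivAt_objective (hF : Differentiable ℝ F) (hflow : IsPowGradientFlow F L x) {t : ℝ}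
    (ht : 0 ≤ t) :
    HasDerivAt (fun s => F (x s ^ L))
      (-(L * ∑ i, (fderiv ℝ F (x t ^ L) (Pi.single i 1) * x t i ^ (L - 1)) ^ 2)) t := by
  have hpow := hasDerivAt_pi.2 fun i => (hflow t ht i).fun_pow L
  refine ((hF (x t ^ L)).hasFDerivAt.comp_hasDerivAt t hpow).congr_deriv ?_
  rw [continuousLinearMap_pi_apply_eq_sum_single, Finset.mul_sum, ← Finset.sum_neg_distrib]
  exact Finset.sum_congr rfl fun i _ => by ring

lemma hasDerivAt_powBregmanSum (hL : L ≠ 0) (hflow : IsPowGradientFlow F L x) {a : ι → ℝ}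
    (ha : 0 ≤ a) {t : ℝ} (ht : 0 ≤ t) (hpos : ∀ i, 0 < x t i) :
    HasDerivAt (fun s => powBregmanSum L a (x s)) (fderiv ℝ F (x t ^ L) (a ^ L - x t ^ L)) t := by
  have hcoord (i : ι) := (hasDerivAt_powBregman hL (ha i) (hpos i)).comp t (hflow t ht i)
  refine (HasDerivAt.fun_sum fun i _ => hcoord i).congr_deriv ?_
  rw [continuousLinearMap_pi_apply_eq_sum_single]
  refine Finset.sum_congr rfl fun i _ => ?_
  have hne : x t i ^ (L - 1) ≠ 0 := (pow_pos (hpos i) _).ne'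
  simp only [Pi.sub_apply, Pi.pow_apply, ← pow_sub_one_mul hL (x t i)]
  field_simp
  ring

lemma antitoneOn_powBregmanSum (hL : L ≠ 0) (hF : Differentiable ℝ F)
    (hconv : ConvexOn ℝ (Set.Ici 0) F) (hflow : IsPowGradientFlow F L x)
    (hpos : ∀ t, 0 ≤ t → ∀ i, 0 < x t i) {a : ι → ℝ} (ha : 0 ≤ a)
    (hmin : IsMinOn F (Set.Ici 0) (a ^ L)) :
    AntitoneOn (fun t => powBregmanSum L a (x t)) (Set.Ici 0) := by
  refine antitoneOn_Ici_of_hasDerivAt_nonpos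
    (fun t ht => hflow.hasDerivAt_powBregmanSum hL ha ht (hpos t ht)) fun t ht => ?_
  have hx : 0 ≤ x t := fun i => (hpos t ht i).le
  exact (fderiv_apply_sub_le_of_convexOn hconv (hF _) (pow_nonneg hx L) (pow_nonneg ha L)).trans
    (sub_nonpos.2 (hmin (pow_nonneg hx L)))

lemma antitoneOn_mul_sub_add_powBregmanSum (hL : L ≠ 0) (hF : Differentiable ℝ F)
    (hconv : ConvexOn ℝ (Set.Ici 0) F) (hflow : IsPowGradientFlow F L x)
    (hpos : ∀ t, 0 ≤ t → ∀ i, 0 < x t i) {a : ι → ℝ} (ha : 0 ≤ a) :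
    AntitoneOn (fun t => t * (F (x t ^ L) - F (a ^ L)) + powBregmanSum L a (x t)) (Set.Ici 0) := by
  refine antitoneOn_Ici_of_hasDerivAt_nonpos (fun t ht =>
    ((hasDerivAt_id t).fun_mul ((hflow.hasDerivAt_objective hF ht).sub_const (F (a ^ L)))).fun_add
      (hflow.hasDerivAt_powBregmanSum hL ha ht (hpos t ht))) fun t ht => ?_
  have hx : 0 ≤ x t := fun i => (hpos t ht i).le
  have hgrad := fderiv_apply_sub_le_of_convexOn hconv (hF _) (pow_nonneg hx L) (pow_nonneg ha L)
  have hdissipation :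
      0 ≤ t * (L * ∑ i, (fderiv ℝ F (x t ^ L) (Pi.single i 1) * x t i ^ (L - 1)) ^ 2) := by
    positivity
  simp only [id_eq]
  linarith

end Fintype

section Finite

variable [Finite ι]

lemma tendsto_objective (hL : L ≠ 0) (hF : Differentiable ℝ F)
    (hconv : ConvexOn ℝ (Set.Ici 0) F) (hflow : IsPowGradientFlow F L x)
    (hpos : ∀ t, 0 ≤ t → ∀ i, 0 < x t i) {a : ι → ℝ} (ha : 0 ≤ a)
    (hmin : IsMinOn F (Set.Ici 0) (a ^ L)) :
    Tendsto (fun t => F (x t ^ L)) atTop (𝓝 (F (a ^ L))) := by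
  cases nonempty_fintype ι
  set V₀ := powBregmanSum L a (x 0)
  have hupper : Tendsto (fun t => F (a ^ L) + V₀ / t) atTop (𝓝 (F (a ^ L))) := by
    simpa using (tendsto_const_nhds (x := F (a ^ L))).add (tendsto_id.const_div_atTop V₀)
  refine tendsto_of_tendsto_of_tendsto_of_le_of_le' tendsto_const_nhds hupper ?_ ?_
  · filter_upwards [eventually_ge_atTop 0] with t ht
    have hx : 0 ≤ x t := fun i => (hpos t ht i).le
    exact hmin (pow_nonneg hx L)
  · filter_upwards [eventually_gt_atTop 0] with t ht
    have hle := hflow.antitoneOn_mul_sub_add_powBregmanSum hL hF hconv hpos ha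
      Set.self_mem_Ici ht.le ht.le
    have hV := powBregmanSum_nonneg hL ha (hpos t ht.le)
    rw [← sub_le_iff_le_add', le_div_iff₀ ht]
    linarith

lemma exists_mapClusterPt (hL : L ≠ 0) (hF : Differentiable ℝ F)
    (hconv : ConvexOn ℝ (Set.Ici 0) F) (hflow : IsPowGradientFlow F L x)
    (hpos : ∀ t, 0 ≤ t → ∀ i, 0 < x t i) {b : ι → ℝ} (hb : 0 ≤ b)
    (hmin : IsMinOn F (Set.Ici 0) (b ^ L)) :
    ∃ a, 0 ≤ a ∧ MapClusterPt a atTop x := by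
  cases nonempty_fintype ι
  have hbdd : ∀ᶠ t in atTop, x t ∈ Metric.closedBall b √(2 * powBregmanSum L b (x 0)) := by
    filter_upwards [eventually_ge_atTop 0] with t ht
    refine (dist_le_sqrt_powBregmanSum hL hb (hpos t ht)).trans (Real.sqrt_le_sqrt ?_)
    gcongr 2 * ?_
    exact hflow.antitoneOn_powBregmanSum hL hF hconv hpos hb hmin Set.self_mem_Ici ht ht
  obtain ⟨a, -, ha⟩ :=
    (isCompact_closedBall b _).exists_mapClusterPt (tendsto_principal.2 hbdd)
  refine ⟨a, isClosed_Ici.mem_of_mapClusterPt ha ?_, ha⟩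
  filter_upwards [eventually_ge_atTop 0] with t ht i using (hpos t ht i).le

lemma isMinOn_of_mapClusterPt (hL : L ≠ 0) (hF : Differentiable ℝ F)
    (hconv : ConvexOn ℝ (Set.Ici 0) F) (hflow : IsPowGradientFlow F L x)
    (hpos : ∀ t, 0 ≤ t → ∀ i, 0 < x t i) {a b : ι → ℝ} (hb : 0 ≤ b)
    (hmin : IsMinOn F (Set.Ici 0) (b ^ L)) (ha : MapClusterPt a atTop x) :
    IsMinOn F (Set.Ici 0) (a ^ L) := by
  have hcluster : MapClusterPt (F (a ^ L)) atTop (fun t => F (x t ^ L)) :=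
    ha.continuousAt_comp (f := fun v => F (v ^ L))
      (hF.continuous.comp (continuous_pow L)).continuousAt
  have heq : F (a ^ L) = F (b ^ L) :=
    eq_of_nhds_neBot (hcluster.neBot.mono
      (inf_le_inf_left _ (hflow.tendsto_objective hL hF hconv hpos hb hmin)))
  exact fun w hw => heq.trans_le (hmin hw)

lemma tendsto_of_mapClusterPt (hL : L ≠ 0) (hF : Differentiable ℝ F)
    (hconv : ConvexOn ℝ (Set.Ici 0) F) (hflow : IsPowGradientFlow F L x)
    (hpos : ∀ t, 0 ≤ t → ∀ i, 0 < x t i) {a : ι → ℝ} (ha : 0 ≤ a)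
    (hmin : IsMinOn F (Set.Ici 0) (a ^ L)) (hcluster : MapClusterPt a atTop x) :
    Tendsto x atTop (𝓝 a) := by
  cases nonempty_fintype ι
  have hV : Tendsto (fun t => powBregmanSum L a (x t)) atTop (𝓝 0) := by
    refine tendsto_atTop_of_antitoneOn_of_mapClusterPt
      (hflow.antitoneOn_powBregmanSum hL hF hconv hpos ha hmin)
      (fun t ht => powBregmanSum_nonneg hL ha (hpos t ht)) ?_
    simpa [Function.comp_def, powBregmanSum_self] using
      hcluster.continuousAt_comp (continuousAt_powBregmanSum_self hL ha)
  have hsqrt : Tendsto (fun t => √(2 * powBregmanSum L a (x t))) atTop (𝓝 0) := by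
    simpa using (hV.const_mul 2).sqrt
  refine tendsto_iff_dist_tendsto_zero.2
    (squeeze_zero' (Eventually.of_forall fun _ => dist_nonneg) ?_ hsqrt)
  filter_upwards [eventually_ge_atTop 0] with t ht
  exact dist_le_sqrt_powBregmanSum hL ha (hpos t ht)

end Finite

theorem exists_tendsto_pow_isMinOn [Fintype ι] (hL : 2 ≤ L) (hF : ContDiff ℝ 1 F)
    (hconv : ConvexOn ℝ (Set.Ici 0) F) (hmin : ∃ z ∈ Set.Ici 0, IsMinOn F (Set.Ici 0) z)
    (hflow : IsPowGradientFlow F L x) (h0 : ∀ i, 0 < x 0 i) :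
    ∃ u ∈ Set.Ici 0, IsMinOn F (Set.Ici 0) u ∧ Tendsto (fun t => x t ^ L) atTop (𝓝 u) := by
  have hL0 : L ≠ 0 := by omega
  have hdiff : Differentiable ℝ F := hF.differentiable one_ne_zero
  have hpos (t : ℝ) (ht : 0 ≤ t) (i : ι) : 0 < x t i := hflow.pos hL hF h0 ht i
  obtain ⟨z, hz, hzmin⟩ := hmin
  obtain ⟨b, hb, rfl⟩ : ∃ b : ι → ℝ, 0 ≤ b ∧ b ^ L = z :=
    ⟨fun i => z i ^ (L : ℝ)⁻¹, fun i => Real.rpow_nonneg (hz i) _,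
      funext fun i => Real.rpow_inv_natCast_pow (hz i) hL0⟩
  obtain ⟨a, ha, hcluster⟩ := hflow.exists_mapClusterPt hL0 hdiff hconv hpos hb hzmin
  have hamin := hflow.isMinOn_of_mapClusterPt hL0 hdiff hconv hpos hb hzmin hcluster
  exact ⟨a ^ L, pow_nonneg ha L, hamin,
    (hflow.tendsto_of_mapClusterPt hL0 hdiff hconv hpos ha hamin hcluster).pow L⟩

end IsPowGradientFlow
end Flow

section LeastSquares

variable {E H : Type*} [NormedAddCommGroup E] [NormedSpace ℝ E] [NormedAddCommGroup H]
  [InnerProductSpace ℝ H]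

/-- The least-squares objective of a linear system `f z = y`. The factor `1 / 2` makes
`fᵀ (f z - y)` its gradient, without a constant. -/
def leastSquares (f : E →L[ℝ] H) (y : H) (z : E) : ℝ := ‖f z - y‖ ^ 2 / 2

lemma contDiff_leastSquares {n : WithTop ℕ∞} (f : E →L[ℝ] H) (y : H) :
    ContDiff ℝ n (leastSquares f y) :=
  ((f.contDiff.sub contDiff_const).norm_sq ℝ).div_const 2

lemma fderiv_leastSquares_apply (f : E →L[ℝ] H) (y : H) (z v : E) :
    fderiv ℝ (leastSquares f y) z v = inner ℝ (f z - y) (f v) := by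
  have h := ((f.hasFDerivAt (x := z)).sub_const y).norm_sq.mul_const (2 : ℝ)⁻¹
  have hfun : leastSquares f y = fun z => ‖f z - y‖ ^ 2 * 2⁻¹ := by
    ext w
    exact div_eq_mul_inv _ _
  rw [hfun, h.fderiv]
  simp [inner_sub_left]

lemma convexOn_leastSquares (f : E →L[ℝ] H) (y : H) {s : Set E} (hs : Convex ℝ s) :
    ConvexOn ℝ s (leastSquares f y) := by
  have hnorm : ConvexOn ℝ s fun z => ‖f z - y‖ :=
    (convexOn_univ_norm.comp_affineMap (f.toLinearMap.toAffineMap - AffineMap.const ℝ E y)).subset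
      (Set.subset_univ s) hs
  have hsq := (hnorm.pow (fun _ _ => norm_nonneg _) 2).smul (by positivity : (0 : ℝ) ≤ 2⁻¹)
  exact hsq.congr fun z _ => (div_eq_inv_mul _ _).symm

lemma exists_isMinOn_leastSquares {ι : Type*} [Fintype ι] [FiniteDimensional ℝ H]
    (f : (ι → ℝ) →L[ℝ] H) (y : H) :
    ∃ z ∈ Set.Ici 0, IsMinOn (leastSquares f y) (Set.Ici 0) z := by
  have := FiniteDimensional.proper_real H
  obtain ⟨z, hz, hmin⟩ := exists_isMinOn_norm_sub (f : (ι → ℝ) →ₗ[ℝ] H) y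
  refine ⟨z, hz, fun w hw => ?_⟩
  have hle : ‖f z - y‖ ≤ ‖f w - y‖ := hmin hw
  simp only [leastSquares, Set.mem_ofPred_eq]
  gcongr

end LeastSquares

section LinearSystem

variable {m n : Type*} [Fintype m] [Fintype n]

/-- The linear map `z ↦ A z` of a matrix. Its codomain carries the Euclidean norm, so that
`leastSquares` measures residuals in it, while its domain stays the plain function space, so that
the entrywise order and powers are available. -/
def mulVecEuclidean (A : Matrix m n ℝ) : (n → ℝ) →L[ℝ] EuclideanSpace ℝ m :=
  (EuclideanSpace.equiv m ℝ).symm.toContinuousLinearMap ∘L A.mulVecLin.toContinuousLinearMap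

variable (A : Matrix m n ℝ) (y : m → ℝ)

lemma leastSquares_mulVecEuclidean (z : n → ℝ) :
    leastSquares (mulVecEuclidean A) (WithLp.toLp 2 y) z = (∑ j, ((A *ᵥ z) j - y j) ^ 2) / 2 := by
  rw [leastSquares, EuclideanSpace.real_norm_sq_eq]
  rfl

lemma fderiv_leastSquares_mulVecEuclidean_single [DecidableEq n] (z : n → ℝ) (i : n) :
    fderiv ℝ (leastSquares (mulVecEuclidean A) (WithLp.toLp 2 y)) z (Pi.single i 1) =
      (Aᵀ *ᵥ (A *ᵥ z - y)) i := by
  rw [fderiv_leastSquares_apply]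
  simp [mulVecEuclidean, PiLp.inner_apply, Matrix.mulVec, dotProduct]

end LinearSystem

section GradFlow

variable {M N : ℕ} {A : Matrix (Fin M) (Fin N) ℝ} {y : Fin M → ℝ}

lemma mem_nnlsSet_iff {z : Fin N → ℝ} :
    z ∈ nnlsSet A y ↔ z ∈ Set.Ici 0 ∧
      IsMinOn (leastSquares (mulVecEuclidean A) (WithLp.toLp 2 y)) (Set.Ici 0) z := by
  simp only [nnlsSet, isMinOn_iff, leastSquares_mulVecEuclidean,
    div_le_div_iff_of_pos_right (zero_lt_two' ℝ), Set.mem_Ici, Pi.le_def, Pi.zero_apply,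
    Set.mem_ofPred_eq]

lemma isPowGradientFlow_of_gradFlow {L : ℕ} {x : ℝ → Fin N → ℝ} (hflow : GradFlow A y L x) :
    IsPowGradientFlow (leastSquares (mulVecEuclidean A) (WithLp.toLp 2 y)) L x := by
  intro t ht i
  rw [fderiv_leastSquares_mulVecEuclidean_single]
  exact hflow t ht i

end GradFlow

theorem stmt0 {M N : ℕ} (L : ℕ) (hL : 2 ≤ L)
    (A : Matrix (Fin M) (Fin N) ℝ) (y : Fin M → ℝ)
    (x : ℝ → Fin N → ℝ) (x0 : Fin N → ℝ) (hx0 : ∀ i, 0 < x0 i)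
    (hinit : x 0 = x0)
    (hflow : GradFlow A y L x) :
    ∃ xinf : Fin N → ℝ,
      Tendsto (fun t => fun i => x t i ^ L) atTop (𝓝 xinf) ∧
      (∀ i, 0 ≤ xinf i) ∧ xinf ∈ nnlsSet A y := by
  subst hinit
  obtain ⟨xinf, hnonneg, hmin, hlim⟩ :=
    (isPowGradientFlow_of_gradFlow hflow).exists_tendsto_pow_isMinOn hL
      (contDiff_leastSquares _ _) (convexOn_leastSquares _ _ (convex_Ici 0))
      (exists_isMinOn_leastSquares _ _) hx0
  exact ⟨xinf, hlim, hnonneg, mem_nnlsSet_iff.2 ⟨hnonneg, hmin⟩⟩
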